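/- Separation theorem, converse part under the channel strong converse property (Theorem 6.5, part 2, channel version, spectral form). Let V = {Vⁿ} be a general source and W = {Wⁿ} a general channel satisfying sup_X I_(X;Y) = sup_X Ī(X;Y), where the suprema are over all channel inputs X = {Xⁿ}. If V is transmissible over W, then H̄(V) ≤ sup_X I_(X;Y). -/

import Mathlib

open Filter Real Topology

namespace ISC

/-- Words of length `n` over alphabet `A`. -/
abbrev Word (A : Type*) (n : ℕ) : Type _ := Fin n → A

/-- `p` is a probability mass function. -/
def IsPMF {α : Type*} (p : α → ℝ) : Prop :=
  (∀ a, 0 ≤ p a) ∧ HasSum p 1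

/-- Probability of the event `S` under the pmf `p`. -/
noncomputable def prob {α : Type*} (p : α → ℝ) (S : Set α) : ℝ :=
  ∑' a, S.indicator p a

/-- Output marginal `P_{Yⁿ}` of the channel `W` fed with the joint input law `P_{VⁿXⁿ}`. -/
noncomputable def outDist {𝒱 𝒳 𝒴 : Type*} {n : ℕ}
    (PVX : Word 𝒱 n × Word 𝒳 n → ℝ) (W : Word 𝒳 n → Word 𝒴 n → ℝ)
    (y : Word 𝒴 n) : ℝ :=
  ∑' vx : Word 𝒱 n × Word 𝒳 n, PVX vx * W vx.2 y

/-- Joint law of `(Vⁿ, Xⁿ, Yⁿ)`: `P_{VⁿXⁿ}(v,x) · Wⁿ(y|x)`. -/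
noncomputable def jointLaw {𝒱 𝒳 𝒴 : Type*} {n : ℕ}
    (PVX : Word 𝒱 n × Word 𝒳 n → ℝ) (W : Word 𝒳 n → Word 𝒴 n → ℝ) :
    Word 𝒱 n × Word 𝒳 n × Word 𝒴 n → ℝ :=
  fun z => PVX (z.1, z.2.1) * W z.2.1 z.2.2

/-- The joint input law `P_{VⁿXⁿ}` induced by the deterministic encoder `φ`:
`P_{Vⁿ}(v) 1{x = φ(v)}`. -/
noncomputable def codeInput {𝒱 𝒳 : Type*} [DecidableEq 𝒳] {n : ℕ} (PV : Word 𝒱 n → ℝ)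
    (φ : Word 𝒱 n → Word 𝒳 n) : Word 𝒱 n × Word 𝒳 n → ℝ :=
  fun vx => if vx.2 = φ vx.1 then PV vx.1 else 0

/-- Error probability `εₙ` of the joint source-channel code `(φ, ψ)`. -/
noncomputable def errProb {𝒱 𝒳 𝒴 : Type*} {n : ℕ}
    (PV : Word 𝒱 n → ℝ) (W : Word 𝒳 n → Word 𝒴 n → ℝ)
    (φ : Word 𝒱 n → Word 𝒳 n) (ψ : Word 𝒴 n → Word 𝒱 n) : ℝ :=
  ∑' v, PV v * prob (W (φ v)) {y | ψ y ≠ v}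

/-- `V` is transmissible over `W`. -/
def Transmissible {𝒱 𝒳 𝒴 : Type*} (PV : (n : ℕ) → Word 𝒱 n → ℝ)
    (W : (n : ℕ) → Word 𝒳 n → Word 𝒴 n → ℝ) : Prop :=
  ∃ (φ : (n : ℕ) → Word 𝒱 n → Word 𝒳 n) (ψ : (n : ℕ) → Word 𝒴 n → Word 𝒱 n),
    Tendsto (fun n => errProb (PV n) (W n) (φ n) (ψ n)) atTop (nhds 0)

/-- Output marginal of the channel `W` for an input distribution `P_{Xⁿ}`. -/
noncomputable def outDistX {𝒳 𝒴 : Type*} {n : ℕ}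
    (PX : Word 𝒳 n → ℝ) (W : Word 𝒳 n → Word 𝒴 n → ℝ) (y : Word 𝒴 n) : ℝ :=
  ∑' x : Word 𝒳 n, PX x * W x y

/-- Joint law of `(Xⁿ, Yⁿ)`: `P_{Xⁿ}(x) · Wⁿ(y|x)`. -/
noncomputable def jointXY {𝒳 𝒴 : Type*} {n : ℕ}
    (PX : Word 𝒳 n → ℝ) (W : Word 𝒳 n → Word 𝒴 n → ℝ) :
    Word 𝒳 n × Word 𝒴 n → ℝ :=
  fun z => PX z.1 * W z.1 z.2

/-- Limit superior in probability of a sequence of random variables `Z i`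
distributed according to the pmfs `p i`. -/
noncomputable def plimsup {α : ℕ → Type*} (p : (i : ℕ) → α i → ℝ)
    (Z : (i : ℕ) → α i → ℝ) : EReal :=
  sInf {β : EReal |
    Tendsto (fun i => prob (p i) {a | β < (Z i a : EReal)}) atTop (nhds 0)}

/-- Limit inferior in probability of a sequence of random variables `Z i`
distributed according to the pmfs `p i`. -/
noncomputable def pliminf {α : ℕ → Type*} (p : (i : ℕ) → α i → ℝ)
    (Z : (i : ℕ) → α i → ℝ) : EReal :=
  sSup {β : EReal |
    Tendsto (fun i => prob (p i) {a | (Z i a : EReal) < β}) atTop (nhds 0)}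

/-- Spectral sup-entropy rate `H̄(V)`. -/
noncomputable def Hbar {𝒱 : Type*} (PV : (n : ℕ) → Word 𝒱 n → ℝ) : EReal :=
  plimsup (fun n => PV n) (fun n v => (1 / (n : ℝ)) * Real.log (1 / PV n v))

/-- Spectral inf-entropy rate `H_(V)`. -/
noncomputable def Hlow {𝒱 : Type*} (PV : (n : ℕ) → Word 𝒱 n → ℝ) : EReal :=
  pliminf (fun n => PV n) (fun n v => (1 / (n : ℝ)) * Real.log (1 / PV n v))

/-- Spectral inf-information rate `I_(X;Y)` of the channel `W` with input `X`. -/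
noncomputable def Ilow {𝒳 𝒴 : Type*} (PX : (n : ℕ) → Word 𝒳 n → ℝ)
    (W : (n : ℕ) → Word 𝒳 n → Word 𝒴 n → ℝ) : EReal :=
  pliminf (fun n => jointXY (PX n) (W n))
    (fun n z => (1 / (n : ℝ)) * Real.log (W n z.1 z.2 / outDistX (PX n) (W n) z.2))

/-- Spectral sup-information rate `Ī(X;Y)` of the channel `W` with input `X`. -/
noncomputable def Ihigh {𝒳 𝒴 : Type*} (PX : (n : ℕ) → Word 𝒳 n → ℝ)
    (W : (n : ℕ) → Word 𝒳 n → Word 𝒴 n → ℝ) : EReal :=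
  plimsup (fun n => jointXY (PX n) (W n))
    (fun n z => (1 / (n : ℝ)) * Real.log (W n z.1 z.2 / outDistX (PX n) (W n) z.2))

/-- `sup_X I_(X;Y)`: the supremum over all channel inputs. -/
noncomputable def supIlow {𝒳 𝒴 : Type*}
    (W : (n : ℕ) → Word 𝒳 n → Word 𝒴 n → ℝ) : EReal :=
  ⨆ PX : {PX : (n : ℕ) → Word 𝒳 n → ℝ // ∀ n, IsPMF (PX n)}, Ilow PX.1 W

/-! An encoder `φ` turns `W` into a channel `v ↦ W (φ v)` from source words to outputs, whose
output law and information densities are those of `W` fed with the law of `φ Vⁿ`. Under the joint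
law of `(Vⁿ, Yⁿ)`, whenever `log (1 / P(v)) > s` and the information density is at most `t`, the
joint mass `P(v) W(y | φ v)` is at most `exp (t - s) P(y)`. A decoder selects one `v` for each
`y`, so such pairs that are also decoded correctly have total mass at most `exp (t - s)`. For
`s = n z` and `t = n b` with `b < z` this vanishes, so no tail of the entropy rate outlives the
corresponding tail of the information rate. -/

section Prob

variable {α β : Type*} {p : α → ℝ}

theorem prob_nonneg (h0 : ∀ a, 0 ≤ p a) (S : Set α) : 0 ≤ prob p S :=
  tsum_nonneg (Set.indicator_nonneg fun a _ => h0 a)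

theorem prob_mono (h0 : ∀ a, 0 ≤ p a) (hp : Summable p) {S T : Set α} (hST : S ⊆ T) :
    prob p S ≤ prob p T :=
  (hp.indicator S).tsum_le_tsum (Set.indicator_le_indicator_of_subset hST h0) (hp.indicator T)

theorem prob_union_add_inter (hp : Summable p) (S T : Set α) :
    prob p (S ∪ T) + prob p (S ∩ T) = prob p S + prob p T := by
  simp only [prob]
  rw [← (hp.indicator _).tsum_add (hp.indicator _), ← (hp.indicator _).tsum_add (hp.indicator _)]
  exact tsum_congr (congrFun (Set.indicator_union_add_inter p S T))

theorem prob_union_le (h0 : ∀ a, 0 ≤ p a) (hp : Summable p) (S T : Set α) :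
    prob p (S ∪ T) ≤ prob p S + prob p T := by
  linarith [prob_union_add_inter hp S T, prob_nonneg h0 (S ∩ T)]

theorem IsPMF.prob_univ (hp : IsPMF p) : prob p Set.univ = 1 := by
  simp only [prob, Set.indicator_univ, hp.2.tsum_eq]

theorem IsPMF.prob_le_one (hp : IsPMF p) (S : Set α) : prob p S ≤ 1 :=
  hp.prob_univ ▸ prob_mono hp.1 hp.2.summable S.subset_univ

theorem IsPMF.le_one (hp : IsPMF p) (a : α) : p a ≤ 1 :=
  le_hasSum hp.2 a fun b _ => hp.1 b

theorem IsPMF.summable_mul (hp : IsPMF p) {g : α → ℝ} (hg0 : ∀ a, 0 ≤ g a)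
    (hg1 : ∀ a, g a ≤ 1) : Summable fun a => p a * g a :=
  hp.2.summable.of_nonneg_of_le (fun a => mul_nonneg (hp.1 a) (hg0 a))
    fun a => mul_le_of_le_one_right (hp.1 a) (hg1 a)

theorem prob_le_of_injOn (hp : Summable p) {q : β → ℝ} (hq : IsPMF q) {f : α → β} {S : Set α}
    (hf : S.InjOn f) {c : ℝ} (hc : 0 ≤ c) (hpq : ∀ a ∈ S, p a ≤ c * q (f a)) :
    prob p S ≤ c := by
  have hqf : Summable fun a : S => q (f a) := hq.2.summable.comp_injective hf.injective
  calc prob p S = ∑' a : S, p a := (tsum_subtype S p).symm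
    _ ≤ ∑' a : S, c * q (f a) :=
      (hp.subtype S).tsum_le_tsum (fun a => hpq a a.2) (hqf.mul_left c)
    _ = c * ∑' a : S, q (f a) := tsum_mul_left
    _ ≤ c * ∑' b, q b := by
      gcongr
      exact hqf.tsum_le_tsum_of_inj _ hf.injective (fun b _ => hq.1 b) (fun _ => le_rfl)
        hq.2.summable
    _ = c := by rw [hq.2.tsum_eq, mul_one]

/-- Law of `f a` when `a` has law `p`; it provides the channel input produced by an encoder. -/
noncomputable def pushforward (p : α → ℝ) (f : α → β) (b : β) : ℝ :=
  prob p {a | f a = b}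

theorem tsum_pushforward_mul {f : α → β} {g : β → ℝ} (hpg : Summable fun a => p a * g (f a)) :
    ∑' b, pushforward p f b * g b = ∑' a, p a * g (f a) := by
  rw [← (hpg.hasSum.tsum_fiberwise f).tsum_eq]
  refine tsum_congr fun b => ?_
  rw [pushforward, prob, ← tsum_subtype, ← tsum_mul_right]
  exact tsum_congr fun a => by rw [show f a = b from a.2]

theorem isPMF_pushforward (hp : IsPMF p) (f : α → β) : IsPMF (pushforward p f) := by
  have hfiber : pushforward p f = fun b => ∑' a : f ⁻¹' {b}, p a :=
    funext fun b => (tsum_subtype {a | f a = b} p).symm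
  exact ⟨fun b => prob_nonneg hp.1 _, hfiber ▸ hp.2.tsum_fiberwise f⟩

theorem plimsup_le_plimsup {α β : ℕ → Type*} {p : (n : ℕ) → α n → ℝ} {q : (n : ℕ) → β n → ℝ}
    {Z : (n : ℕ) → α n → ℝ} {Z' : (n : ℕ) → β n → ℝ}
    (hp : ∀ n, IsPMF (p n)) (hq : ∀ n, IsPMF (q n))
    (h : ∀ b z : ℝ, b < z → ∃ u : ℕ → ℝ, Tendsto u atTop (𝓝 0) ∧
      ∀ᶠ n in atTop, prob (p n) {a | z < Z n a} ≤ u n + prob (q n) {c | b < Z' n c}) :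
    plimsup p Z ≤ plimsup q Z' := by
  refine le_sInf fun β hβ => EReal.le_of_forall_lt_iff_le.1 fun z hz => sInf_le ?_
  obtain ⟨b, hβb, hbz⟩ := EReal.lt_iff_exists_real_btwn.1 hz
  obtain ⟨u, hu, hle⟩ := h b z (EReal.coe_lt_coe_iff.1 hbz)
  have hlim := hu.add hβ
  rw [add_zero] at hlim
  simp only [Set.mem_ofPred_eq, EReal.coe_lt_coe_iff]
  refine squeeze_zero' (.of_forall fun n => prob_nonneg (hp n).1 _) ?_ hlim
  filter_upwards [hle] with n hn
  have htail : prob (q n) {c | b < Z' n c} ≤ prob (q n) {c | β < (Z' n c : EReal)} :=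
    prob_mono (hq n).1 (hq n).2.summable fun c hc => hβb.trans (EReal.coe_lt_coe_iff.2 hc)
  linarith

end Prob

section Channel

variable {𝒱 𝒳 𝒴 : Type*} {n : ℕ} {PX : Word 𝒳 n → ℝ} {W : Word 𝒳 n → Word 𝒴 n → ℝ}

theorem isPMF_jointXY (hX : IsPMF PX) (hW : ∀ x, IsPMF (W x)) : IsPMF (jointXY PX W) := by
  have h0 : ∀ z, 0 ≤ jointXY PX W z := fun z => mul_nonneg (hX.1 _) ((hW _).1 _)
  have hrow : ∀ x, HasSum (fun y => jointXY PX W (x, y)) (PX x) := fun x => by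
    simpa only [jointXY, mul_one] using (hW x).2.mul_left (PX x)
  have hs : Summable (jointXY PX W) := (summable_prod_of_nonneg h0).2
    ⟨fun x => (hrow x).summable, by simpa only [(hrow _).tsum_eq] using hX.2.summable⟩
  exact ⟨h0, (hs.hasSum.prod_fiberwise hrow).unique hX.2 ▸ hs.hasSum⟩

theorem prob_jointXY (hX : IsPMF PX) (hW : ∀ x, IsPMF (W x)) (S : Set (Word 𝒳 n × Word 𝒴 n)) :
    prob (jointXY PX W) S = ∑' x, PX x * prob (W x) (Prod.mk x ⁻¹' S) := by
  rw [prob, ((isPMF_jointXY hX hW).2.summable.indicator S).tsum_prod]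
  refine tsum_congr fun x => ?_
  rw [prob, ← tsum_mul_left]
  refine tsum_congr fun y => ?_
  rw [← Set.indicator_const_mul]
  exact (Set.indicator_comp_right (g := jointXY PX W) (Prod.mk x)).symm

theorem prob_jointXY_fst (hX : IsPMF PX) (hW : ∀ x, IsPMF (W x)) (A : Set (Word 𝒳 n)) :
    prob (jointXY PX W) (Prod.fst ⁻¹' A) = prob PX A := by
  rw [prob_jointXY hX hW, prob]
  refine tsum_congr fun x => ?_
  by_cases hx : x ∈ A
  · have huniv : Prod.mk x ⁻¹' (Prod.fst ⁻¹' A) = (Set.univ : Set (Word 𝒴 n)) :=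
      Set.eq_univ_of_forall fun _ => hx
    rw [huniv, (hW x).prob_univ, mul_one, Set.indicator_of_mem hx]
  · simp [hx, prob]

theorem summable_mul_apply (hX : IsPMF PX) (hW : ∀ x, IsPMF (W x)) (y : Word 𝒴 n) :
    Summable fun x => PX x * W x y :=
  hX.summable_mul (fun x => (hW x).1 y) fun x => (hW x).le_one y

theorem isPMF_outDistX (hX : IsPMF PX) (hW : ∀ x, IsPMF (W x)) : IsPMF (outDistX PX W) :=
  ⟨fun y => tsum_nonneg fun x => mul_nonneg (hX.1 x) ((hW x).1 y),
    ((Equiv.prodComm _ _).hasSum_iff.2 (isPMF_jointXY hX hW).2).prod_fiberwise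
      fun y => (summable_mul_apply hX hW y).hasSum⟩

theorem mul_le_outDistX (hX : IsPMF PX) (hW : ∀ x, IsPMF (W x)) (x : Word 𝒳 n) (y : Word 𝒴 n) :
    PX x * W x y ≤ outDistX PX W y :=
  (summable_mul_apply hX hW y).le_tsum x fun x' _ => mul_nonneg (hX.1 x') ((hW x').1 y)

/-- Information density `log (W(y|x) / P_Y(y))`, whose `1/n`-normalization has the spectral
information rates as its limits inferior and superior in probability. -/
noncomputable def infoDensity (PX : Word 𝒳 n → ℝ) (W : Word 𝒳 n → Word 𝒴 n → ℝ)
    (z : Word 𝒳 n × Word 𝒴 n) : ℝ :=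
  log (W z.1 z.2 / outDistX PX W z.2)

theorem outDistX_pushforward {PV : Word 𝒱 n → ℝ} (hV : IsPMF PV) (hW : ∀ x, IsPMF (W x))
    (φ : Word 𝒱 n → Word 𝒳 n) :
    outDistX (pushforward PV φ) W = outDistX PV (W ∘ φ) :=
  funext fun y => tsum_pushforward_mul (summable_mul_apply hV (fun v => hW (φ v)) y)

theorem prob_jointXY_pushforward {PV : Word 𝒱 n → ℝ} (hV : IsPMF PV) (hW : ∀ x, IsPMF (W x))
    (φ : Word 𝒱 n → Word 𝒳 n) (S : Set (Word 𝒳 n × Word 𝒴 n)) :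
    prob (jointXY (pushforward PV φ) W) S =
      prob (jointXY PV (W ∘ φ)) (Prod.map φ id ⁻¹' S) := by
  rw [prob_jointXY (isPMF_pushforward hV φ) hW, prob_jointXY (W := W ∘ φ) hV fun v => hW (φ v)]
  exact tsum_pushforward_mul (hV.summable_mul (fun v => prob_nonneg (hW (φ v)).1 _)
    fun v => (hW (φ v)).prob_le_one _)

theorem mul_le_exp_sub_mul_of_log_le {p w q s t : ℝ} (hp : 0 ≤ p) (hw : 0 ≤ w) (hpq : p * w ≤ q)
    (hs : s ≤ log (1 / p)) (ht : log (w / q) ≤ t) : p * w ≤ exp (t - s) * q := by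
  rcases (mul_nonneg hp hw).eq_or_lt with h0 | hpos
  · rw [← h0] at hpq ⊢
    positivity
  have hp' : 0 < p := pos_of_mul_pos_left hpos hw
  have hw' : 0 < w := pos_of_mul_pos_right hpos hp
  have hq : 0 < q := hpos.trans_le hpq
  have hp_le : p ≤ exp (-s) := by
    rw [one_div, log_inv] at hs
    exact (log_le_iff_le_exp hp').1 (by linarith)
  have hw_le : w ≤ exp t * q := (div_le_iff₀ hq).1 ((log_le_iff_le_exp (div_pos hw' hq)).1 ht)
  calc p * w ≤ exp (-s) * (exp t * q) := by gcongr
    _ = exp (t - s) * q := by rw [← mul_assoc, ← exp_add, neg_add_eq_sub]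

theorem prob_decoded_le (hX : IsPMF PX) (hW : ∀ x, IsPMF (W x)) (ψ : Word 𝒴 n → Word 𝒳 n)
    (s t : ℝ) :
    prob (jointXY PX W)
      {z | s < log (1 / PX z.1) ∧ infoDensity PX W z ≤ t ∧ ψ z.2 = z.1} ≤ exp (t - s) := by
  refine prob_le_of_injOn (isPMF_jointXY hX hW).2.summable (isPMF_outDistX hX hW) (f := Prod.snd)
    ?_ (exp_pos _).le ?_
  · rintro z ⟨-, -, hz⟩ z' ⟨-, -, hz'⟩ hy
    exact Prod.ext (by rw [← hz, hy, hz']) hy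
  · rintro z ⟨hs, ht, -⟩
    exact mul_le_exp_sub_mul_of_log_le (hX.1 _) ((hW _).1 _) (mul_le_outDistX hX hW _ _) hs.le ht

theorem prob_log_inv_gt_le (hX : IsPMF PX) (hW : ∀ x, IsPMF (W x)) (ψ : Word 𝒴 n → Word 𝒳 n)
    (s t : ℝ) :
    prob PX {x | s < log (1 / PX x)} ≤
      exp (t - s) + prob (jointXY PX W) {z | t < infoDensity PX W z} + errProb PX W id ψ := by
  have hJ := isPMF_jointXY hX hW
  let decoded := {z | s < log (1 / PX z.1) ∧ infoDensity PX W z ≤ t ∧ ψ z.2 = z.1}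
  let dense := {z | t < infoDensity PX W z}
  let err := {z : Word 𝒳 n × Word 𝒴 n | ψ z.2 ≠ z.1}
  have hcover : Prod.fst ⁻¹' {x | s < log (1 / PX x)} ⊆ decoded ∪ dense ∪ err := by
    intro z hz
    by_cases hψ : ψ z.2 = z.1
    · exact .inl ((le_or_gt (infoDensity PX W z) t).imp (fun ht => ⟨hz, ht, hψ⟩) id)
    · exact .inr hψ
  have herr : prob (jointXY PX W) err = errProb PX W id ψ := prob_jointXY hX hW err
  calc prob PX {x | s < log (1 / PX x)}
      = prob (jointXY PX W) (Prod.fst ⁻¹' {x | s < log (1 / PX x)}) :=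
        (prob_jointXY_fst hX hW _).symm
    _ ≤ prob (jointXY PX W) (decoded ∪ dense ∪ err) := prob_mono hJ.1 hJ.2.summable hcover
    _ ≤ prob (jointXY PX W) decoded + prob (jointXY PX W) dense + prob (jointXY PX W) err :=
        (prob_union_le hJ.1 hJ.2.summable _ _).trans
          (add_le_add_left (prob_union_le hJ.1 hJ.2.summable _ _) _)
    _ ≤ exp (t - s) + prob (jointXY PX W) dense + errProb PX W id ψ := by
        rw [herr]
        gcongr
        exact prob_decoded_le hX hW ψ s t

theorem prob_log_inv_gt_le_of_code {PV : Word 𝒱 n → ℝ} (hV : IsPMF PV) (hW : ∀ x, IsPMF (W x))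
    (φ : Word 𝒱 n → Word 𝒳 n) (ψ : Word 𝒴 n → Word 𝒱 n) (s t : ℝ) :
    prob PV {v | s < log (1 / PV v)} ≤
      exp (t - s) + prob (jointXY (pushforward PV φ) W)
        {z | t < infoDensity (pushforward PV φ) W z} + errProb PV W φ ψ := by
  rw [prob_jointXY_pushforward hV hW]
  simp only [infoDensity, outDistX_pushforward hV hW]
  exact prob_log_inv_gt_le hV (fun v => hW (φ v)) ψ s t

end Channel

theorem Hbar_le_Ihigh_pushforward {𝒱 𝒳 𝒴 : Type*} {PV : (n : ℕ) → Word 𝒱 n → ℝ}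
    (hPV : ∀ n, IsPMF (PV n)) {W : (n : ℕ) → Word 𝒳 n → Word 𝒴 n → ℝ}
    (hW : ∀ n x, IsPMF (W n x))
    {φ : (n : ℕ) → Word 𝒱 n → Word 𝒳 n} {ψ : (n : ℕ) → Word 𝒴 n → Word 𝒱 n}
    (herr : Tendsto (fun n => errProb (PV n) (W n) (φ n) (ψ n)) atTop (𝓝 0)) :
    Hbar PV ≤ Ihigh (fun n => pushforward (PV n) (φ n)) W := by
  refine plimsup_le_plimsup hPV (fun n => isPMF_jointXY (isPMF_pushforward (hPV n) (φ n)) (hW n))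
    fun b z hbz => ⟨fun n => exp (n * b - n * z) + errProb (PV n) (W n) (φ n) (ψ n), ?_, ?_⟩
  · have hexp : Tendsto (fun n : ℕ => exp (n * b - n * z)) atTop (𝓝 0) := by
      simp only [← mul_sub]
      exact tendsto_exp_atBot.comp
        (tendsto_natCast_atTop_atTop.atTop_mul_const_of_neg (sub_neg.2 hbz))
    simpa only [add_zero] using hexp.add herr
  · filter_upwards [eventually_gt_atTop 0] with n hn
    have hscale : ∀ c r : ℝ, c < 1 / (n : ℝ) * r ↔ n * c < r := fun c r => by
      rw [one_div, ← div_eq_inv_mul, lt_div_iff₀' (Nat.cast_pos.2 hn)]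
    simp only [hscale]
    have hbound := prob_log_inv_gt_le_of_code (hPV n) (hW n) (φ n) (ψ n) (n * z) (n * b)
    simp only [infoDensity] at hbound
    linarith

theorem separation_converse_channel_strong_converse_general {𝒱 𝒳 𝒴 : Type*}
    (PV : (n : ℕ) → Word 𝒱 n → ℝ) (hPV : ∀ n, IsPMF (PV n))
    (W : (n : ℕ) → Word 𝒳 n → Word 𝒴 n → ℝ) (hW : ∀ n x, IsPMF (W n x))
    (htrans : Transmissible PV W) :
    Hbar PV ≤ ⨆ PX : {PX : (n : ℕ) → Word 𝒳 n → ℝ // ∀ n, IsPMF (PX n)}, Ihigh PX.1 W := by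
  obtain ⟨φ, ψ, herr⟩ := htrans
  exact le_iSup_of_le ⟨fun n => pushforward (PV n) (φ n), fun n => isPMF_pushforward (hPV n) (φ n)⟩
    (Hbar_le_Ihigh_pushforward hPV hW herr)

/-- **Separation theorem, converse part under the channel strong converse property**
(Theorem 6.5, part 2, channel version, spectral form). -/
theorem separation_converse_channel_strong_converse
    {𝒱 𝒳 𝒴 : Type} [Countable 𝒱] [Countable 𝒳] [Countable 𝒴]
    (PV : (n : ℕ) → Word 𝒱 n → ℝ) (hPV : ∀ n, IsPMF (PV n))
    (W : (n : ℕ) → Word 𝒳 n → Word 𝒴 n → ℝ) (hW : ∀ n x, IsPMF (W n x))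
    (hsc : supIlow W =
      ⨆ PX : {PX : (n : ℕ) → Word 𝒳 n → ℝ // ∀ n, IsPMF (PX n)}, Ihigh PX.1 W)
    (htrans : Transmissible PV W) :
    Hbar PV ≤ supIlow W :=
  (separation_converse_channel_strong_converse_general PV hPV W hW htrans).trans hsc.ge

end ISC
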